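/- arXiv:math/0002217 — 2 statements merged into one kernel-verified Lean document; each statement's English description precedes it below -/
import Mathlib

section
/- Any countably generated projective module over a local ring is free; consequently every projective module over a local ring is free. -/
universe u

/-! By Zorn's lemma, a projective module over any ring is a direct sum of countably generated
submodules: a section `s` of `(M →₀ R) → M` singles out the sets `I ⊆ M` that contain the support
of `s p` for every `p ∈ I`. Each of them spans a direct summand, they are stable under unions, and
every element lies in a countable one, so the span of `I` grows by countably generated pieces.

Over a local ring, write an element of a projective module as `x = ∑ j, φ j x • y j` with as few
terms as possible. Then the entries of `(φ j (y i)) - 1` are nonunits, hence lie in the Jacobson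
radical, so `(φ j (y i))` is invertible and the `y i` form a basis of a direct summand. Splitting
off such free summands one generator at a time exhausts a countably generated module. -/

section Lattice

theorem isComplemented_sup_of_isCompl_of_le {α : Type*} [Lattice α] [BoundedOrder α]
    [IsModularLattice α] {a a' b : α} (ha : IsCompl a a') (hb : IsComplemented b) (hle : b ≤ a') :
    IsComplemented (a ⊔ b) := by
  obtain ⟨b', hb'⟩ := hb
  have hsup : b ⊔ b' ⊓ a' = a' := by
    rw [← sup_inf_assoc_of_le b' hle, hb'.sup_eq_top, top_inf_eq]
  exact ⟨b' ⊓ a', (hb'.disjoint.mono_right inf_le_left).isCompl_sup_left_of_isCompl_sup_right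
    (hsup.symm ▸ ha)⟩

variable {α : Type*} [CompleteLattice α] [IsModularLattice α]

theorem sSupIndep_insert_of_disjoint {S : Set α} {b : α} (hS : sSupIndep S)
    (hb : Disjoint (sSup S) b) : sSupIndep (insert b S) := by
  intro x hx
  by_cases hxb : x = b
  · rw [hxb]
    exact hb.symm.mono_right (sSup_le_sSup fun y hy => hy.1.resolve_left hy.2)
  · have hxS : x ∈ S := hx.resolve_left hxb
    have hle : sSup (insert b S \ {x}) ≤ sSup (S \ {x}) ⊔ b := by
      rw [Set.insert_sdiff_of_notMem _ (Set.notMem_singleton_iff.2 (Ne.symm hxb)), sSup_insert,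
        sup_comm]
    have hx_sup : x ⊔ sSup (S \ {x}) ≤ sSup S :=
      sup_le (le_sSup hxS) (sSup_le_sSup Set.sdiff_subset)
    exact ((hS hxS).disjoint_sup_right_of_disjoint_sup_left (hb.mono_left hx_sup)).mono_right hle

/-- The independent families of elements satisfying `p` whose supremum lies in `L`: the partial
direct sum decompositions that are enlarged step by step. -/
def partialDecompositions (L : Set α) (p : α → Prop) : Set (Set α) :=
  {S | sSupIndep S ∧ (∀ b ∈ S, p b) ∧ sSup S ∈ L}

theorem insert_mem_partialDecompositions {L : Set α} {p : α → Prop} {S : Set α} {b : α}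
    (hS : S ∈ partialDecompositions L p) (hpb : p b) (hb : Disjoint (sSup S) b)
    (hL : sSup S ⊔ b ∈ L) : insert b S ∈ partialDecompositions L p := by
  refine ⟨sSupIndep_insert_of_disjoint hS.1 hb, Set.forall_mem_insert.2 ⟨hpb, hS.2.1⟩, ?_⟩
  rwa [sSup_insert, sup_comm]

variable [IsCompactlyGenerated α]

theorem exists_sSupIndep_sSup_eq_top {L : Set α} {p : α → Prop} (hL : ∀ T ⊆ L, sSup T ∈ L)
    (hext : ∀ a ∈ L, a ≠ ⊤ → ∃ b, p b ∧ b ≠ ⊥ ∧ Disjoint a b ∧ a ⊔ b ∈ L) :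
    ∃ S : Set α, sSupIndep S ∧ (∀ b ∈ S, p b) ∧ sSup S = ⊤ := by
  obtain ⟨S, hS⟩ : ∃ S, Maximal (· ∈ partialDecompositions L p) S := by
    refine zorn_subset _ fun c hc hchain => ⟨⋃₀ c, ⟨?_, ?_, ?_⟩, fun _ => Set.subset_sUnion_of_mem⟩
    · exact iSupIndep_sUnion_of_directed hchain.directedOn fun S hS => (hc hS).1
    · rintro b ⟨S, hS, hb⟩
      exact (hc hS).2.1 b hb
    · rw [sSup_sUnion, ← sSup_image]
      exact hL _ (Set.image_subset_iff.2 fun S hS => (hc hS).2.2)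
  refine ⟨S, hS.prop.1, hS.prop.2.1, ?_⟩
  by_contra htop
  obtain ⟨b, hpb, hbot, hdisj, hmem⟩ := hext _ hS.prop.2.2 htop
  have hins := insert_mem_partialDecompositions hS.prop hpb hdisj hmem
  have hbS : b ∈ S := hS.le_of_ge hins (Set.subset_insert b S) (Set.mem_insert b S)
  exact hbot (hdisj.eq_bot_of_ge (le_sSup hbS))

theorem exists_sSupIndep_forall_le_sSup {L : Set α} {p : α → Prop} (hbot : ⊥ ∈ L) (c : ℕ → α)
    (hext : ∀ a ∈ L, ∀ n, ∃ b, p b ∧ Disjoint a b ∧ a ⊔ b ∈ L ∧ c n ≤ a ⊔ b) :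
    ∃ S : Set α, sSupIndep S ∧ (∀ b ∈ S, p b) ∧ ∀ n, c n ≤ sSup S := by
  have hstep : ∀ (S : partialDecompositions L p) (n : ℕ), ∃ S' : partialDecompositions L p,
      S.1 ⊆ S'.1 ∧ c n ≤ sSup S'.1 := by
    intro S n
    obtain ⟨b, hpb, hdisj, hmem, hle⟩ := hext _ S.2.2.2 n
    refine ⟨⟨insert b S.1, insert_mem_partialDecompositions S.2 hpb hdisj hmem⟩,
      Set.subset_insert _ _, ?_⟩
    rwa [sSup_insert, sup_comm]
  choose next hsub hle using hstep
  let S₀ : partialDecompositions L p := ⟨∅, sSupIndep_empty, by simp, by simpa using hbot⟩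
  let Q : ℕ → partialDecompositions L p := fun n => Nat.rec S₀ (fun k S => next S k) n
  have hmono : Monotone fun n => (Q n).1 := monotone_nat_of_le_succ fun n => hsub (Q n) n
  refine ⟨⋃ n, (Q n).1, sSupIndep_iUnion_of_directed hmono.directed_le fun n => (Q n).2.1, ?_,
    fun n => ?_⟩
  · intro b hb
    obtain ⟨n, hn⟩ := Set.mem_iUnion.1 hb
    exact (Q n).2.2.1 b hn
  · exact (hle (Q n) n).trans (sSup_le_sSup (Set.subset_iUnion (fun n => (Q n).1) (n + 1)))

end Lattice

section Jacobson

variable {R : Type*} [Ring R]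

theorem isUnit_of_sub_one_mem_jacobson_bot {r : R} (hr : r - 1 ∈ (⊥ : Ideal R).jacobson) :
    IsUnit r := by
  have exists_left_inv : ∀ a : R, a - 1 ∈ (⊥ : Ideal R).jacobson → ∃ b, b * a = 1 := by
    intro a ha
    obtain ⟨b, hb⟩ := Ideal.exists_mul_sub_mem_of_sub_one_mem_jacobson a ha
    exact ⟨b, sub_eq_zero.1 (Ideal.mem_bot.1 hb)⟩
  obtain ⟨s, hsr⟩ := exists_left_inv r hr
  have hs : s - 1 ∈ (⊥ : Ideal R).jacobson := by
    have : s - 1 = -s * (r - 1) := by rw [mul_sub, neg_mul, hsr, mul_one]; abel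
    exact this ▸ Ideal.mul_mem_left _ _ hr
  obtain ⟨t, hts⟩ := exists_left_inv s hs
  have htr : t = r := left_inv_eq_right_inv hts hsr
  exact ⟨⟨r, s, htr ▸ hts, hsr⟩, rfl⟩

variable [IsLocalRing R]

theorem eq_zero_or_one_of_isIdempotentElem {e : R} (he : IsIdempotentElem e) :
    e = 0 ∨ e = 1 := by
  rcases IsLocalRing.isUnit_or_isUnit_of_add_one (add_sub_cancel e 1) with hu | hu
  · exact .inr (hu.mul_left_cancel (by rw [he.eq, mul_one]))
  · exact .inl (hu.mul_left_cancel (by rw [he.one_sub_mul_self, mul_zero]))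

theorem isDedekindFiniteMonoid_of_isLocalRing : IsDedekindFiniteMonoid R where
  mul_eq_one_symm {a b} hab := by
    have hidem : IsIdempotentElem (b * a) := by
      rw [IsIdempotentElem, mul_assoc, ← mul_assoc a, hab, one_mul]
    refine (eq_zero_or_one_of_isIdempotentElem hidem).resolve_left fun hzero =>
      one_ne_zero (α := R) ?_
    calc (1 : R) = a * (b * a) * b := by rw [← mul_assoc, hab, one_mul, hab]
      _ = 0 := by rw [hzero, mul_zero, zero_mul]

theorem mem_jacobson_bot_of_not_isUnit {x : R} (hx : ¬IsUnit x) :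
    x ∈ (⊥ : Ideal R).jacobson := by
  have := isDedekindFiniteMonoid_of_isLocalRing (R := R)
  rw [Ideal.mem_jacobson_iff]
  intro y
  have hyx : ¬IsUnit (-(y * x)) := by
    rw [IsUnit.neg_iff]
    rintro ⟨u, hu⟩
    exact hx (.of_mul_eq_one_right (↑u⁻¹ * y) (by rw [mul_assoc, ← hu, Units.inv_mul]))
  obtain ⟨u, hu⟩ := (IsLocalRing.isUnit_or_isUnit_of_add_one
    (neg_add_cancel_comm_assoc (y * x) 1)).resolve_left hyx
  refine ⟨↑u⁻¹, Ideal.mem_bot.2 (sub_eq_zero.2 ?_)⟩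
  calc ↑u⁻¹ * y * x + ↑u⁻¹ = ↑u⁻¹ * (1 + y * x) := by noncomm_ring
    _ = 1 := by rw [← hu, Units.inv_mul]

theorem isUnit_matrix_of_forall_not_isUnit_sub_one {n : Type*} [Fintype n] [DecidableEq n]
    {C : Matrix n n R} (hC : ∀ i j, ¬IsUnit ((C - 1) i j)) : IsUnit C := by
  apply isUnit_of_sub_one_mem_jacobson_bot
  rw [← Ideal.matrix_bot (R := R)]
  exact Ideal.matrix_jacobson_le _ fun i j => mem_jacobson_bot_of_not_isUnit (hC i j)

end Jacobson

section Module

variable {R M : Type*} [Ring R] [AddCommGroup M] [Module R M]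

theorem projective_of_isComplemented [Module.Projective R M] {N : Submodule R M}
    (hN : IsComplemented N) : Module.Projective R N := by
  obtain ⟨N', hN'⟩ := hN
  exact .of_split N.subtype (N.projectionOnto N' hN') (N.projectionOnto_comp_subtype hN')

theorem free_of_sSupIndep {S : Set (Submodule R M)} (hS : sSupIndep S) (htop : sSup S = ⊤)
    (hfree : ∀ N ∈ S, Module.Free R N) : Module.Free R M := by
  classical
  have (N : S) : Module.Free R N.1 := hfree N.1 N.2
  have hinternal : DirectSum.IsInternal fun N : S => N.1 :=
    DirectSum.isInternal_submodule_of_iSupIndep_of_iSup_eq_top ((sSupIndep_iff S).1 hS)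
      (by rw [← sSup_eq_iSup', htop])
  exact .of_equiv (LinearEquiv.ofBijective (DirectSum.coeLinearMap fun N : S => N.1) hinternal)

theorem isComplemented_of_mem_of_sSupIndep {S : Set (Submodule R M)} (hS : sSupIndep S)
    (htop : sSup S = ⊤) {N : Submodule R M} (hN : N ∈ S) : IsComplemented N := by
  refine ⟨sSup (S \ {N}), hS hN, codisjoint_iff.2 ?_⟩
  rw [← sSup_insert, Set.insert_sdiff_singleton, Set.insert_eq_of_mem hN, htop]

theorem sup_map_projection {N N' : Submodule R M} (h : IsCompl N N') (Q : Submodule R M) :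
    N ⊔ Q.map (N'.projection N h.symm) = N ⊔ Q := by
  have hdecomp := Submodule.projection_add_projection_eq_self h
  apply le_antisymm <;> refine sup_le le_sup_left ?_
  · rintro _ ⟨q, hq, rfl⟩
    rw [Submodule.projection_eq_self_sub_projection h, sub_eq_neg_add]
    exact Submodule.add_mem_sup (neg_mem (Submodule.projection_apply_mem h q)) hq
  · intro q hq
    rw [← hdecomp q]
    exact Submodule.add_mem_sup (Submodule.projection_apply_mem h q)
      (Submodule.mem_map_of_mem hq)

theorem free_of_countable_of_forall_exists_free {t : Set M} (ht : t.Countable)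
    (hspan : Submodule.span R t = ⊤)
    (hext : ∀ N : Submodule R M, IsComplemented N → ∀ x : M, ∃ F : Submodule R M,
      Module.Free R F ∧ Disjoint N F ∧ IsComplemented (N ⊔ F) ∧ x ∈ N ⊔ F) :
    Module.Free R M := by
  obtain ⟨S, hS, hfree, hle⟩ := exists_sSupIndep_forall_le_sSup
    (L := {N : Submodule R M | IsComplemented N}) (p := fun F => Module.Free R F)
    isComplemented_bot (fun n => Submodule.span R {Set.enumerateCountable ht 0 n})
    fun N hN n => by
      simpa only [Submodule.span_singleton_le_iff_mem, Set.mem_ofPred_eq] using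
        hext N hN (Set.enumerateCountable ht 0 n)
  refine free_of_sSupIndep hS ?_ hfree
  rw [eq_top_iff, ← hspan, Submodule.span_le]
  intro x hx
  obtain ⟨n, rfl⟩ := Set.subset_range_enumerate ht 0 hx
  exact (Submodule.span_singleton_le_iff_mem _ _).1 (hle n)

end Module

section CountablyGeneratedSummands

variable {R M : Type*} [Ring R] [AddCommGroup M] [Module R M]

/-- A submodule with a countable generating set. -/
def IsCountablyGeneratedSubmodule (N : Submodule R M) : Prop :=
  ∃ t : Set M, t.Countable ∧ Submodule.span R t = N

/-- For a section `s` of `(M →₀ R) → M`, the sets `I ⊆ M` over which `s` restricts to a section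
of `(I →₀ R) → span R I`. -/
def SupportClosed (s : M →ₗ[R] M →₀ R) (I : Set M) : Prop :=
  ∀ p ∈ I, ((s p).support : Set M) ⊆ I

theorem SupportClosed.sUnion {s : M →ₗ[R] M →₀ R} {C : Set (Set M)}
    (hC : ∀ I ∈ C, SupportClosed s I) : SupportClosed s (⋃₀ C) := by
  rintro p ⟨I, hI, hp⟩
  exact (hC I hI p hp).trans (Set.subset_sUnion_of_mem hI)

theorem SupportClosed.union {s : M →ₗ[R] M →₀ R} {I J : Set M} (hI : SupportClosed s I)
    (hJ : SupportClosed s J) : SupportClosed s (I ∪ J) := by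
  rw [← Set.sUnion_pair]
  exact .sUnion (by rintro K (rfl | rfl) <;> assumption)

theorem SupportClosed.isComplemented_span {s : M →ₗ[R] M →₀ R}
    (hs : Function.LeftInverse (Finsupp.linearCombination R id) s) {I : Set M}
    (hI : SupportClosed s I) : IsComplemented (Submodule.span R I) := by
  classical
  let π : M →ₗ[R] M := Finsupp.linearCombination R (I.indicator id) ∘ₗ s
  have hπ_mem (x : M) : π x ∈ Submodule.span R I := by
    refine Submodule.sum_mem _ fun p _ => Submodule.smul_mem _ _ ?_
    by_cases hp : p ∈ I
    · simpa [hp] using Submodule.subset_span hp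
    · simp [hp]
  have hπ_fix : ∀ x ∈ Submodule.span R I, π x = x := by
    refine fun x hx => LinearMap.eqOn_span (f := π) (g := LinearMap.id) (fun p hp => ?_) hx
    calc π p = Finsupp.linearCombination R id (s p) :=
          Finset.sum_congr rfl fun q hq => by simp [hI p hp hq]
      _ = p := hs p
  exact ⟨_, LinearMap.IsProj.isCompl ⟨hπ_mem, hπ_fix⟩⟩

theorem exists_countable_mem_forall_subset {α : Type*} {f : α → Set α}
    (hf : ∀ a, (f a).Countable) (a : α) :
    ∃ C : Set α, a ∈ C ∧ C.Countable ∧ ∀ b ∈ C, f b ⊆ C := by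
  let A : ℕ → Set α := fun n => (fun S => ⋃ b ∈ S, f b)^[n] {a}
  have hA_succ (n : ℕ) : A (n + 1) = ⋃ b ∈ A n, f b := Function.iterate_succ_apply' _ _ _
  refine ⟨⋃ n, A n, Set.mem_iUnion.2 ⟨0, rfl⟩, Set.countable_iUnion fun n => ?_,
    fun b hb c hc => ?_⟩
  · induction n with
    | zero => exact Set.countable_singleton a
    | succ n ih => exact hA_succ n ▸ ih.biUnion fun b _ => hf b
  · obtain ⟨n, hn⟩ := Set.mem_iUnion.1 hb
    exact Set.mem_iUnion.2 ⟨n + 1, hA_succ n ▸ Set.mem_biUnion hn hc⟩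

theorem exists_isCountablyGeneratedSubmodule_disjoint_sup_eq {N : Submodule R M}
    (hN : IsComplemented N) {C : Set M} (hC : C.Countable) :
    ∃ K : Submodule R M, IsCountablyGeneratedSubmodule K ∧ Disjoint N K ∧
      N ⊔ K = N ⊔ Submodule.span R C := by
  obtain ⟨N', hN'⟩ := hN
  refine ⟨(Submodule.span R C).map (N'.projection N hN'.symm),
    ⟨_, hC.image _, Submodule.span_image _⟩, ?_, sup_map_projection hN' _⟩
  exact hN'.disjoint.mono_right (LinearMap.map_le_range.trans (Submodule.range_projection _).le)

theorem exists_sSupIndep_isCountablyGeneratedSubmodule [Module.Projective R M] :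
    ∃ S : Set (Submodule R M), sSupIndep S ∧ (∀ N ∈ S, IsCountablyGeneratedSubmodule N) ∧
      sSup S = ⊤ := by
  obtain ⟨s, hs⟩ := (Module.projective_def (R := R) (P := M)).1 inferInstance
  apply exists_sSupIndep_sSup_eq_top (L := Submodule.span R '' {I | SupportClosed s I})
  · intro T hT
    obtain ⟨C, hC, rfl⟩ := Set.subset_image_iff.1 hT
    refine ⟨⋃₀ C, .sUnion hC, ?_⟩
    rw [Set.sUnion_eq_biUnion, Submodule.span_iUnion₂, sSup_image]
  · rintro _ ⟨I, hI, rfl⟩ htop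
    obtain ⟨x, hx⟩ : ∃ x, x ∉ Submodule.span R I := by
      by_contra! h
      exact htop (Submodule.eq_top_iff'.2 h)
    obtain ⟨C, hxC, hC, hC_closed⟩ :=
      exists_countable_mem_forall_subset (fun p => (s p).support.countable_toSet) x
    obtain ⟨K, hK, hdisj, hsup⟩ :=
      exists_isCountablyGeneratedSubmodule_disjoint_sup_eq (hI.isComplemented_span hs) hC
    refine ⟨K, hK, ?_, hdisj, I ∪ C, hI.union hC_closed, by rw [hsup, Submodule.span_union]⟩
    rintro rfl
    refine hx ?_
    rw [← sup_bot_eq (Submodule.span R I), hsup]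
    exact Submodule.mem_sup_right (Submodule.subset_span hxC)

end CountablyGeneratedSummands

section FreeSummands

variable {R M : Type*} [Ring R] [AddCommGroup M] [Module R M]

/-- The matrix of the pairing between vectors `y i` and functionals `φ j`. It is the matrix of
`v ↦ (φ j (∑ i, v i • y i))ⱼ` acting on row vectors `v`. -/
def pairingMatrix {ι : Type*} (φ : ι → M →ₗ[R] R) (y : ι → M) : Matrix ι ι R :=
  Matrix.of fun i j => φ j (y i)

theorem vecMul_pairingMatrix {ι : Type*} [Fintype ι] (φ : ι → M →ₗ[R] R) (y : ι → M) (v : ι → R) :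
    Matrix.vecMul v (pairingMatrix φ y) = LinearMap.pi φ (∑ i, v i • y i) := by
  ext j
  simp [Matrix.vecMul, dotProduct, pairingMatrix, map_sum]

theorem free_and_isComplemented_span_of_isUnit_pairingMatrix {ι : Type*} [Fintype ι]
    [DecidableEq ι] {φ : ι → M →ₗ[R] R} {y : ι → M} (h : IsUnit (pairingMatrix φ y)) :
    Module.Free R (Submodule.span R (Set.range y)) ∧
      IsComplemented (Submodule.span R (Set.range y)) := by
  obtain ⟨Z, hZ, -⟩ := isUnit_iff_exists.1 h
  let Y : (ι → R) →ₗ[R] M := Fintype.linearCombination R y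
  let Ψ : M →ₗ[R] (ι → R) := Z.toLinearMapRight' ∘ₗ LinearMap.pi φ
  have hΨY (v : ι → R) : Ψ (Y v) = v := by
    change Matrix.vecMul (LinearMap.pi φ (∑ i, v i • y i)) Z = v
    rw [← vecMul_pairingMatrix, Matrix.vecMul_vecMul, hZ, Matrix.vecMul_one]
  have hspan : Submodule.span R (Set.range y) = LinearMap.range Y :=
    (Fintype.range_linearCombination R y).symm
  have hproj : LinearMap.IsProj (LinearMap.range Y) (Y ∘ₗ Ψ) :=
    ⟨fun x => ⟨Ψ x, rfl⟩, by rintro _ ⟨v, rfl⟩; exact congrArg Y (hΨY v)⟩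
  rw [hspan]
  exact ⟨.of_equiv (LinearEquiv.ofInjective Y (Function.LeftInverse.injective hΨY)),
    _, hproj.isCompl⟩

theorem exists_sum_succAbove_smul_eq {n : ℕ} {a d : Fin (n + 1) → R} (y : Fin (n + 1) → M)
    (hd : ∑ j, a j * d j = 0) {i : Fin (n + 1)} (hi : IsUnit (d i)) :
    ∃ z : Fin n → M, (∀ j, z j ∈ Submodule.span R (Set.range y)) ∧
      ∑ j, a (i.succAbove j) • z j = ∑ j, a j • y j := by
  obtain ⟨u, hu⟩ := hi
  have hy (j) : y j ∈ Submodule.span R (Set.range y) := Submodule.subset_span ⟨j, rfl⟩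
  have hai : ∑ j, a (i.succAbove j) * (d (i.succAbove j) * ↑u⁻¹) = -a i := by
    rw [Fin.sum_univ_succAbove _ i, ← hu] at hd
    simp only [← mul_assoc, ← Finset.sum_mul]
    rw [eq_neg_of_add_eq_zero_right hd, neg_mul, Units.mul_inv_cancel_right]
  refine ⟨fun j => y (i.succAbove j) - (d (i.succAbove j) * ↑u⁻¹) • y i,
    fun j => sub_mem (hy _) (Submodule.smul_mem _ _ (hy i)), ?_⟩
  simp only [smul_sub, Finset.sum_sub_distrib, smul_smul, ← Finset.sum_smul]
  rw [hai, neg_smul, sub_neg_eq_add, add_comm, ← Fin.sum_univ_succAbove (fun j => a j • y j) i]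

theorem exists_fin_sum_dual_smul_eq [Module.Projective R M] (x : M) :
    ∃ (n : ℕ) (φ : Fin n → M →ₗ[R] R) (y : Fin n → M), ∑ j, φ j x • y j = x := by
  obtain ⟨s, hs⟩ := (Module.projective_def (R := R) (P := M)).1 inferInstance
  let e := (s x).support.equivFin.symm
  refine ⟨_, fun j => Finsupp.lapply (e j).1 ∘ₗ s, fun j => (e j).1, ?_⟩
  calc ∑ j, s x (e j) • (e j).1 = ∑ p : (s x).support, s x p • p.1 :=
        e.sum_comp fun p => s x p • p.1
    _ = Finsupp.linearCombination R id (s x) :=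
        Finset.sum_coe_sort (s x).support fun p => s x p • p
    _ = x := hs x

variable [IsLocalRing R]

theorem exists_free_isComplemented_le_span {n : ℕ} {φ : Fin n → M →ₗ[R] R} {y : Fin n → M} {x : M}
    (hx : ∑ j, φ j x • y j = x) :
    ∃ F ≤ Submodule.span R (Set.range y), x ∈ F ∧ Module.Free R F ∧ IsComplemented F := by
  induction n with
  | zero => exact ⟨⊥, bot_le, by simpa using hx.symm, inferInstance, isComplemented_bot⟩
  | succ n ih =>
    by_cases hunit : ∃ i k, IsUnit ((pairingMatrix φ y - 1) i k)
    · obtain ⟨i, k, hik⟩ := hunit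
      have hrel : Matrix.vecMul (fun j => φ j x) (pairingMatrix φ y - 1) = 0 := by
        rw [Matrix.vecMul_sub, vecMul_pairingMatrix, hx, Matrix.vecMul_one]
        exact sub_self _
      obtain ⟨z, hz, hsum⟩ := exists_sum_succAbove_smul_eq y (congrFun hrel k) hik
      obtain ⟨F, hF, hFx⟩ := ih (φ := fun j => φ (i.succAbove j)) (hsum.trans hx)
      exact ⟨F, hF.trans (Submodule.span_le.2 (Set.range_subset_iff.2 hz)), hFx⟩
    · simp only [not_exists] at hunit
      obtain ⟨hfree, hcompl⟩ := free_and_isComplemented_span_of_isUnit_pairingMatrix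
        (isUnit_matrix_of_forall_not_isUnit_sub_one hunit)
      refine ⟨_, le_rfl, ?_, hfree, hcompl⟩
      rw [← hx]
      exact Submodule.sum_mem _ fun j _ => Submodule.smul_mem _ _ (Submodule.subset_span ⟨j, rfl⟩)

theorem exists_free_disjoint_isComplemented_sup [Module.Projective R M] {N : Submodule R M}
    (hN : IsComplemented N) (x : M) :
    ∃ F : Submodule R M, Module.Free R F ∧ Disjoint N F ∧ IsComplemented (N ⊔ F) ∧ x ∈ N ⊔ F := by
  obtain ⟨N', hN'⟩ := hN
  let ρ := N'.projection N hN'.symm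
  have hρ_mem (z : M) : ρ z ∈ N' := Submodule.projection_apply_mem hN'.symm z
  obtain ⟨n, φ, y, hy⟩ := exists_fin_sum_dual_smul_eq (R := R) (ρ x)
  have hρx : ∑ j, φ j (ρ x) • ρ (y j) = ρ x := by
    calc ∑ j, φ j (ρ x) • ρ (y j) = ρ (∑ j, φ j (ρ x) • y j) := by simp only [map_sum, map_smul]
      _ = ρ x := by rw [hy]; exact Submodule.projection_apply_of_mem_left _ (hρ_mem x)
  obtain ⟨F, hF_span, hxF, hfree, hF⟩ := exists_free_isComplemented_le_span hρx
  have hFN' : F ≤ N' :=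
    hF_span.trans (Submodule.span_le.2 (Set.range_subset_iff.2 fun j => hρ_mem (y j)))
  refine ⟨F, hfree, hN'.disjoint.mono_right hFN',
    isComplemented_sup_of_isCompl_of_le hN' hF hFN', ?_⟩
  rw [← Submodule.projection_add_projection_eq_self hN' x]
  exact Submodule.add_mem_sup (Submodule.projection_apply_mem hN' x) hxF

theorem free_of_projective_of_countable_span [Module.Projective R M] {t : Set M}
    (ht : t.Countable) (hspan : Submodule.span R t = ⊤) : Module.Free R M :=
  free_of_countable_of_forall_exists_free ht hspan fun _ hN x =>
    exists_free_disjoint_isComplemented_sup hN x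

theorem free_of_projective_of_isLocalRing [Module.Projective R M] : Module.Free R M := by
  obtain ⟨S, hS, hcount, htop⟩ :=
    exists_sSupIndep_isCountablyGeneratedSubmodule (R := R) (M := M)
  refine free_of_sSupIndep hS htop fun N hN => ?_
  obtain ⟨t, ht, rfl⟩ := hcount N hN
  have := projective_of_isComplemented (isComplemented_of_mem_of_sSupIndep hS htop hN)
  exact free_of_projective_of_countable_span (ht.preimage Subtype.val_injective)
    Submodule.span_span_coe_preimage

end FreeSummands

/-- Kaplansky: over a local ring, countably generated projective modules are free;
consequently all projective modules are free. -/
theorem kaplansky_local_projective_free (R : Type u) [Ring R] [IsLocalRing R] :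
    (∀ (P : Type u) [AddCommGroup P] [Module R P], Module.Projective R P →
      (∃ s : Set P, s.Countable ∧ Submodule.span R s = ⊤) → Module.Free R P) ∧
    (∀ (P : Type u) [AddCommGroup P] [Module R P], Module.Projective R P →
      Module.Free R P) :=
  ⟨fun _ _ _ _ ⟨_, hs, hspan⟩ => free_of_projective_of_countable_span hs hspan,
    fun _ _ _ _ => free_of_projective_of_isLocalRing⟩
end

section
/- A finite group ring over a Dedekind domain has left self-injective dimension at most 1: for R = kG with k a Dedekind domain and G a finite group, id(R as left R-module) ≤ 1. -/
universe u

/-!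
If a ring homomorphism `R → S` makes `S` a projective left `R`-module, then the coextension of
scalars `Hom_R(S, -)` is exact; being right adjoint to the exact restriction of scalars it also
preserves injectives, so it does not raise injective dimensions. For a finite group `G`, the form
`(x, y) ↦ (y * x).coeff 1` identifies the left module `k[G]` with `Hom_k(k[G], k)`, so that
`id k[G] ≤ id k`. Finally `id k ≤ 1` when `k` is hereditary: maps from an ideal to a quotient of an
injective module lift to that module, so quotients of injectives satisfy Baer's criterion.
-/

universe v

open CategoryTheory Limits

section ExactFunctor

variable {C D : Type*} [Category* C] [Category* D] [Abelian C] [Abelian D]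
  (F : C ⥤ D) [F.PreservesZeroMorphisms] [PreservesFiniteLimits F] [F.PreservesEpimorphisms]

theorem shortExact_map_of_preservesEpimorphisms {S : ShortComplex C} (hS : S.ShortExact) :
    (S.map F).ShortExact := by
  have := hS.mono_f
  have := hS.epi_g
  exact
    { exact := ((S.map F).exact_and_mono_f_iff_f_is_kernel.2
        ⟨KernelFork.mapIsLimit _ hS.fIsKernel F⟩).1
      mono_f := inferInstanceAs (Mono (F.map S.f))
      epi_g := inferInstanceAs (Epi (F.map S.g)) }

theorem hasInjectiveDimensionLE_obj [EnoughInjectives C] [F.PreservesInjectiveObjects]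
    (X : C) (n : ℕ) [hX : HasInjectiveDimensionLE X n] :
    HasInjectiveDimensionLE (F.obj X) n := by
  induction n generalizing X with
  | zero =>
    have : Injective X := injective_iff_hasInjectiveDimensionLT_one.2 hX
    exact injective_iff_hasInjectiveDimensionLT_one.1 (F.injective_obj X)
  | succ n ih =>
    let S : ShortComplex C := .mk (Injective.ι X) (cokernel.π _) (cokernel.condition _)
    have hS : S.ShortExact := { exact := ShortComplex.exact_cokernel _ }
    have : HasInjectiveDimensionLE S.X₃ n :=
      (hS.hasInjectiveDimensionLT_X₃_iff n inferInstance).2 hX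
    exact ((shortExact_map_of_preservesEpimorphisms F hS).hasInjectiveDimensionLT_X₃_iff n
      (F.injective_obj (Injective.under X))).1 (ih S.X₃)

end ExactFunctor

section CoextendScalars

variable {R S : Type u} [Ring R] [Ring S] (f : R →+* S)

instance coextendScalars_preservesInjectiveObjects :
    (ModuleCat.coextendScalars.{u, u, u} f).PreservesInjectiveObjects :=
  Functor.preservesInjectiveObjects_of_adjunction_of_preservesMonomorphisms
    (ModuleCat.restrictCoextendScalarsAdj f)

variable [Module.Projective R ((ModuleCat.restrictScalars f).obj (ModuleCat.of S S))]

instance coextendScalars_preservesEpimorphisms :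
    (ModuleCat.coextendScalars.{u, u, u} f).PreservesEpimorphisms where
  preserves {M N} p hp := by
    rw [ModuleCat.epi_iff_surjective] at hp ⊢
    intro φ
    obtain ⟨ψ, hψ⟩ := Module.projective_lifting_property p.hom
      (ModuleCat.CoextendScalars.equiv f N φ) hp
    exact ⟨(ModuleCat.CoextendScalars.equiv f M).symm ψ, ModuleCat.CoextendScalars.ext hψ⟩

theorem hasInjectiveDimensionLE_coextendScalars (M : ModuleCat.{u} R) (n : ℕ)
    [HasInjectiveDimensionLE M n] :
    HasInjectiveDimensionLE ((ModuleCat.coextendScalars f).obj M) n :=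
  hasInjectiveDimensionLE_obj (ModuleCat.coextendScalars f) M n

end CoextendScalars

section MonoidAlgebra

open MonoidAlgebra

variable (k : Type u) [Ring k] (G : Type u)

section Monoid

variable [Monoid G]

/-- The monoid algebra `k[G]`, viewed as a left `k`-module by restriction of scalars. The ring `k`
need not be commutative, so this is not phrased through `Algebra k k[G]`. -/
noncomputable abbrev monoidAlgebraRestrictScalars : ModuleCat.{u} k :=
  (ModuleCat.restrictScalars (singleOneRingHom (R := k) (M := G))).obj (.of k[G] k[G])

/-- The left `k[G]`-module coextended from the regular module of `k`: the `k`-linear functionals on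
`k[G]`, on which `x : k[G]` acts by `(x • φ) y = φ (y * x)`. -/
noncomputable abbrev monoidAlgebraCoextendScalars : ModuleCat.{u} k[G] :=
  (ModuleCat.coextendScalars (singleOneRingHom (R := k) (M := G))).obj (.of k k)

/-- The identity of `k[G]`, comparing its restricted and its coefficientwise `k`-module
structures. -/
noncomputable def monoidAlgebraRestrictScalarsEquiv :
    monoidAlgebraRestrictScalars k G ≃ₗ[k] k[G] where
  __ := AddEquiv.refl k[G]
  map_smul' c x := by
    ext g
    exact coeff_single_one_mul (R := k) x c g

instance free_monoidAlgebraRestrictScalars : Module.Free k (monoidAlgebraRestrictScalars k G) :=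
  .of_equiv (monoidAlgebraRestrictScalarsEquiv k G).symm

/-- The elements of the coextended module as functionals for the coefficientwise `k`-module
structure of `k[G]`. -/
noncomputable def monoidAlgebraCoextendScalarsEquiv :
    monoidAlgebraCoextendScalars k G ≃+ (k[G] →ₗ[k] k) :=
  (ModuleCat.CoextendScalars.equiv _ (.of k k)).toAddEquiv.trans
    ((monoidAlgebraRestrictScalarsEquiv k G).arrowCongrAddEquiv (.refl k k))

/-- The functional `x ↦ x.coeff 1`, which for a finite group is the Frobenius form of `k[G]`. -/
noncomputable def monoidAlgebraCoeffOne : monoidAlgebraCoextendScalars k G :=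
  (monoidAlgebraCoextendScalarsEquiv k G).symm
    (Finsupp.lapply 1 ∘ₗ (coeffLinearEquiv k).toLinearMap)

variable {k G}

theorem monoidAlgebraCoextendScalarsEquiv_smul_coeffOne (x y : k[G]) :
    monoidAlgebraCoextendScalarsEquiv k G (x • monoidAlgebraCoeffOne k G) y = (y * x).coeff 1 :=
  rfl

end Monoid

variable {k G} [Group G]

theorem monoidAlgebraCoextendScalarsEquiv_smul_coeffOne_single (x : k[G]) (g : G) :
    monoidAlgebraCoextendScalarsEquiv k G (x • monoidAlgebraCoeffOne k G) (single g 1) =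
      x.coeff g⁻¹ := by
  rw [monoidAlgebraCoextendScalarsEquiv_smul_coeffOne, coeff_single_mul_apply, one_mul, mul_one]

theorem smul_monoidAlgebraCoeffOne_injective :
    Function.Injective fun x : k[G] ↦ x • monoidAlgebraCoeffOne k G := by
  intro x y h
  ext g
  have := congrArg (monoidAlgebraCoextendScalarsEquiv k G · (single g⁻¹ 1)) h
  simpa only [monoidAlgebraCoextendScalarsEquiv_smul_coeffOne_single, inv_inv] using this

variable [Finite G]

theorem smul_monoidAlgebraCoeffOne_surjective :
    Function.Surjective fun x : k[G] ↦ x • monoidAlgebraCoeffOne k G := by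
  intro φ
  let x : k[G] := ofCoeff <| Finsupp.equivFunOnFinite.symm fun h ↦
    monoidAlgebraCoextendScalarsEquiv k G φ (single h⁻¹ 1)
  refine ⟨x, (monoidAlgebraCoextendScalarsEquiv k G).injective ?_⟩
  ext g
  simp [x, monoidAlgebraCoextendScalarsEquiv_smul_coeffOne_single]

variable (k G)

/-- A finite group ring is its own coextension of scalars, through
`x ↦ x • monoidAlgebraCoeffOne k G`. -/
noncomputable def monoidAlgebraEquivCoextendScalars :
    k[G] ≃ₗ[k[G]] monoidAlgebraCoextendScalars k G :=
  .ofBijective (.toSpanSingleton k[G] _ (monoidAlgebraCoeffOne k G))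
    ⟨smul_monoidAlgebraCoeffOne_injective, smul_monoidAlgebraCoeffOne_surjective⟩

theorem hasInjectiveDimensionLE_monoidAlgebra (n : ℕ)
    [HasInjectiveDimensionLE (ModuleCat.of k k) n] :
    HasInjectiveDimensionLE (ModuleCat.of k[G] k[G]) n :=
  (ModuleCat.hasInjectiveDimensionLE_iff_of_linearEquiv
    (monoidAlgebraEquivCoextendScalars k G) n).2
      (hasInjectiveDimensionLE_coextendScalars _ (.of k k) n)

end MonoidAlgebra

section Hereditary

variable {R : Type u} [Ring R] {M N : Type v} [AddCommGroup M] [Module R M]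
  [AddCommGroup N] [Module R N]

theorem injective_quotient_range_iff [hN : Module.Injective R N] (f : M →ₗ[R] N)
    (hf : Function.Injective f) :
    Module.Injective R (N ⧸ LinearMap.range f) ↔
      HasInjectiveDimensionLE (ModuleCat.of R M) 1 := by
  let S : ShortComplex (ModuleCat.{v} R) :=
    ModuleCat.shortComplexOfCompEqZero f _ f.exact_map_mkQ_range.linearMap_comp_eq_zero
  have hS : S.ShortExact :=
    ModuleCat.shortComplex_shortExact S f.exact_map_mkQ_range hf (Submodule.mkQ_surjective _)
  rw [Module.injective_iff_injective_object] at hN ⊢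
  exact injective_iff_hasInjectiveDimensionLT_one.trans (hS.hasInjectiveDimensionLT_X₃_iff 0 hN)

variable [Small.{v} R] [∀ I : Ideal R, Module.Projective R I]

theorem injective_of_surjective_of_projective_ideal [Module.Injective R M] (p : M →ₗ[R] N)
    (hp : Function.Surjective p) : Module.Injective R N := by
  refine Module.Baer.injective fun I g ↦ ?_
  obtain ⟨s, rfl⟩ := Module.projective_lifting_property p g hp
  obtain ⟨t, ht⟩ := Module.Baer.of_injective ‹_› I s
  exact ⟨p ∘ₗ t, fun x hx ↦ congrArg p (ht x hx)⟩

variable (R M)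

theorem hasInjectiveDimensionLE_one_of_projective_ideal :
    HasInjectiveDimensionLE (ModuleCat.of R M) 1 := by
  obtain ⟨E, hE, ι, hι⟩ := EnoughInjectives.presentation (ModuleCat.of R M)
  have : Module.Injective R E := Module.injective_module_of_injective_object R E
  rw [← injective_quotient_range_iff ι.hom ((ModuleCat.mono_iff_injective ι).1 hι)]
  exact injective_of_surjective_of_projective_ideal _ (Submodule.mkQ_surjective _)

end Hereditary

theorem projective_ideal_of_isDedekindDomain {k : Type*} [CommRing k] [IsDedekindDomain k]
    (I : Ideal k) : Module.Projective k I :=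
  have : Module.FinitePresentation k I := Module.finitePresentation_of_finite k I
  Module.Flat.projective_of_finitePresentation

theorem groupRing_selfinjdim_le_one_general (k : Type u) [Ring k]
    [HasInjectiveDimensionLE (ModuleCat.of k k) 1] (G : Type u) [Group G] [Finite G]
    (E : Type u) [AddCommGroup E] [Module (MonoidAlgebra k G) E]
    [Module.Injective (MonoidAlgebra k G) E]
    (f : MonoidAlgebra k G →ₗ[MonoidAlgebra k G] E) (hf : Function.Injective f) :
    Module.Injective (MonoidAlgebra k G) (E ⧸ LinearMap.range f) :=
  (injective_quotient_range_iff f hf).2 (hasInjectiveDimensionLE_monoidAlgebra k G 1)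

/-- For a Dedekind domain `k` and finite group `G`, the group ring `k[G]` has left
self-injective dimension at most 1. -/
theorem groupRing_selfinjdim_le_one (k : Type u) [CommRing k] [IsDomain k]
    [IsDedekindDomain k] (G : Type u) [Group G] [Fintype G]
    (E : Type u) [AddCommGroup E] [Module (MonoidAlgebra k G) E]
    [Module.Injective (MonoidAlgebra k G) E]
    (f : MonoidAlgebra k G →ₗ[MonoidAlgebra k G] E) (hf : Function.Injective f) :
    Module.Injective (MonoidAlgebra k G) (E ⧸ LinearMap.range f) := by
  have (I : Ideal k) : Module.Projective k I := projective_ideal_of_isDedekindDomain I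
  have := hasInjectiveDimensionLE_one_of_projective_ideal k k
  exact groupRing_selfinjdim_le_one_general k G E f hf
end
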